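/- Let β : G → H be a group homomorphism with kernel F, let g ∈ G and f ∈ F. Suppose y₁, …, y_t are elements of G and p₁, …, p_t are elements of F satisfying yᵢ⁻¹ * g * yᵢ = g * pᵢ for each i, and suppose that every element h of the centralizer of β(g) in H can be written as h = β(g)^k * β(yᵢ) for some integer k and some index i. Then g and g * f are conjugate in G if and only if there exist an index i and an element x ∈ F such that f = (g⁻¹ * x⁻¹ * g) * pᵢ * x. -/

import Mathlib

/-!
A conjugator `z` from `g` to an element of the coset `g F` maps into the centralizer of `β g`, so
it factors as `z = c * yᵢ * x` with `c` commuting with `g` and `x ∈ F`. The factor `c` fixes `g`,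
the factor `yᵢ` carries `g` to `g * pᵢ`, and conjugating `g * pᵢ` by `x` is the same as twisting
`pᵢ` by `x` along the automorphism `u ↦ g⁻¹ * u * g` of `F`.
-/

section

variable {G M : Type*} [Group G] [MulOneClass M]

theorem conj_mul_eq_mul_iff_eq_twisted_conj {g p f x : G} :
    x⁻¹ * (g * p) * x = g * f ↔ f = (g⁻¹ * x⁻¹ * g) * p * x := by
  rw [eq_comm, ← eq_inv_mul_iff_mul_eq]
  simp only [mul_assoc]

theorem conj_mul_left_of_commute {c g : G} (hc : Commute c g) (y : G) :
    (c * y)⁻¹ * g * (c * y) = y⁻¹ * g * y :=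
  calc (c * y)⁻¹ * g * (c * y) = y⁻¹ * (c⁻¹ * g * c) * y := by group
    _ = y⁻¹ * g * y := by rw [hc.inv_mul_cancel]

theorem commute_map_of_conj_eq_mul_mem_ker {β : G →* M} {g f z : G} (hf : f ∈ β.ker)
    (hz : z⁻¹ * g * z = g * f) : Commute (β z) (β g) := by
  have h : g * z = z * (g * f) := by rw [← hz]; group
  have hβ : β g * β z = β z * β g := by
    simpa only [map_mul, MonoidHom.mem_ker.mp hf, mul_one] using congrArg β h
  exact hβ.symm

theorem conj_iff_twisted_conj_of_centralizer_cosets_general {ι : Sort*}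
    (β : G →* M) (g f : G) (hf : f ∈ β.ker) (y p : ι → G)
    (hy : ∀ i, (y i)⁻¹ * g * y i = g * p i)
    (hcent : ∀ z : G, Commute (β z) (β g) →
      ∃ (c : G) (i : ι), Commute c g ∧ β z = β (c * y i)) :
    (∃ z : G, z⁻¹ * g * z = g * f) ↔
      ∃ (i : ι) (x : G), x ∈ β.ker ∧ f = (g⁻¹ * x⁻¹ * g) * p i * x := by
  have conj_by_mul (i : ι) (x : G) : (y i * x)⁻¹ * g * (y i * x) = x⁻¹ * (g * p i) * x := by
    rw [← hy]
    group
  constructor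
  · rintro ⟨z, hz⟩
    obtain ⟨c, i, hc, hzc⟩ := hcent z (commute_map_of_conj_eq_mul_mem_ker hf hz)
    obtain ⟨x, hx, rfl⟩ : ∃ x ∈ β.ker, z = c * (y i * x) :=
      ⟨(c * y i)⁻¹ * z, β.eq_iff.mp hzc, by group⟩
    rw [conj_mul_left_of_commute hc, conj_by_mul] at hz
    exact ⟨i, x, hx, conj_mul_eq_mul_iff_eq_twisted_conj.mp hz⟩
  · rintro ⟨i, x, -, hfx⟩
    exact ⟨y i * x, (conj_by_mul i x).trans (conj_mul_eq_mul_iff_eq_twisted_conj.mpr hfx)⟩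

end

/-- Algebraic core of the reduction of the conjugacy problem in `G` to twisted conjugacy in
`F = ker β`: if `yᵢ⁻¹ g yᵢ = g pᵢ` with `pᵢ ∈ F`, and every element of the centralizer of
`β g` in `H` is of the form `(β g)^k * β (yᵢ)`, then `g` and `g * f` (with `f ∈ F`) are
conjugate in `G` iff `f = (g⁻¹ x⁻¹ g) pᵢ x` for some index `i` and some `x ∈ F`. -/
theorem conj_iff_twisted_conj_of_centralizer_cosets {G H : Type*} [Group G] [Group H]
    (β : G →* H) (g f : G) (hf : f ∈ β.ker) {t : ℕ} (y p : Fin t → G)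
    (hp : ∀ i, p i ∈ β.ker)
    (hy : ∀ i, (y i)⁻¹ * g * y i = g * p i)
    (hcent : ∀ h : H, h * β g = β g * h → ∃ (k : ℤ) (i : Fin t), h = (β g) ^ k * β (y i)) :
    (∃ z : G, z⁻¹ * g * z = g * f) ↔
      ∃ (i : Fin t) (x : G), x ∈ β.ker ∧ f = (g⁻¹ * x⁻¹ * g) * p i * x :=
  conj_iff_twisted_conj_of_centralizer_cosets_general β g f hf y p hy fun z hz ↦
    let ⟨k, i, hki⟩ := hcent (β z) hz
    ⟨g ^ k, i, (Commute.refl g).zpow_left k, by rw [hki, map_mul, map_zpow]⟩
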